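/- Let w be a group-word in n variables, let m ∈ ℕ, let v = [w(x_1,...,x_n), x_{n+1}, ..., x_{n+m}], and let r ∈ ℕ. If G is a group with |G_w| ≤ r, then |G_v| ≤ (2r)^{2^m}. -/

import Mathlib

/-- The set of `w`-values in `G`: images of the word `w` (an element of the free
group on `n` generators) under all homomorphisms `FreeGroup (Fin n) →* G`. -/
def wValues {n : ℕ} (w : FreeGroup (Fin n)) (G : Type*) [Group G] : Set G :=
  Set.range fun g : Fin n → G => FreeGroup.lift g w

/-- `G_w^* = G_w ∪ G_w⁻¹`. -/
def wValuesStar {n : ℕ} (w : FreeGroup (Fin n)) (G : Type*) [Group G] : Set G :=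
  wValues w G ∪ (wValues w G)⁻¹

/-- The verbal subgroup `w(G)` generated by all `w`-values. -/
def verbalSubgroup {n : ℕ} (w : FreeGroup (Fin n)) (G : Type*) [Group G] : Subgroup G :=
  Subgroup.closure (wValues w G)

/-- The iterated commutator subgroup `[H, G, ..., G]` with `G` repeated `k` times. -/
def iterCommSub (G : Type*) [Group G] (H : Subgroup G) : ℕ → Subgroup G
  | 0 => H
  | k + 1 => ⁅iterCommSub G H k, (⊤ : Subgroup G)⁆

/-- The set of conjugates `x^S = {g⁻¹ x g : g ∈ S}`. -/
def conjSet {G : Type*} [Group G] (x : G) (S : Set G) : Set G :=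
  (fun g => g⁻¹ * x * g) '' S

/-- `G` is an `FC(w)`-group: every conjugacy set `x^{G_w}` is finite. -/
def IsFCw {n : ℕ} (w : FreeGroup (Fin n)) (G : Type*) [Group G] : Prop :=
  ∀ x : G, (conjSet x (wValues w G)).Finite

/-- `G` is a `BFC(w)`-group: the sets `x^{G_w}` are finite of bounded size. -/
def IsBFCw {n : ℕ} (w : FreeGroup (Fin n)) (G : Type*) [Group G] : Prop :=
  ∃ c : ℕ, ∀ x : G,
    (conjSet x (wValues w G)).Finite ∧ (conjSet x (wValues w G)).ncard ≤ c

/-- A subgroup `H` is `FC`-embedded in `G` if `x^H` is finite for every `x ∈ G`. -/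
def IsFCEmbedded {G : Type*} [Group G] (H : Subgroup G) : Prop :=
  ∀ x : G, (conjSet x (H : Set G)).Finite

/-- A subgroup `H` is `BFC`-embedded in `G` if the sets `x^H` are finite of bounded size. -/
def IsBFCEmbedded {G : Type*} [Group G] (H : Subgroup G) : Prop :=
  ∃ d : ℕ, ∀ x : G,
    (conjSet x (H : Set G)).Finite ∧ (conjSet x (H : Set G)).ncard ≤ d

/-- A word `w` is `(1/k)`-concise (`k ≥ 1`): in every group `G` with `G_w` finite,
the subgroup `[w(G), G, ..., G]` (with `G` repeated `k - 1` times) is finite. -/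
def IsFracConcise {n : ℕ} (w : FreeGroup (Fin n)) (k : ℕ) : Prop :=
  ∀ (G : Type*) [Group G], (wValues w G).Finite →
    ((iterCommSub G (verbalSubgroup w G) (k - 1) : Subgroup G) : Set G).Finite

/-- A word `w` is `0`-concise: in every group `G` with `G_w` finite, some iterated
commutator subgroup `[w(G), G, ..., G]` is finite. -/
def IsZeroConcise {n : ℕ} (w : FreeGroup (Fin n)) : Prop :=
  ∀ (G : Type*) [Group G], (wValues w G).Finite →
    ∃ k : ℕ, ((iterCommSub G (verbalSubgroup w G) k : Subgroup G) : Set G).Finite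

/-- The commutator `[a, b] = a⁻¹ b⁻¹ a b`. -/
def pcomm {G : Type*} [Group G] (a b : G) : G := a⁻¹ * b⁻¹ * a * b

/-- The word `w(x_1, ..., x_n)` viewed in the free group on `n + m` generators. -/
def extendWord {n : ℕ} (m : ℕ) (w : FreeGroup (Fin n)) : FreeGroup (Fin (n + m)) :=
  FreeGroup.map (Fin.castAdd m) w

/-- The word `v = [w(x_1, ..., x_n), x_{n+1}, ..., x_{n+m}]`. -/
def commWord {n : ℕ} (m : ℕ) (w : FreeGroup (Fin n)) : FreeGroup (Fin (n + m)) :=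
  (List.ofFn fun i : Fin m => FreeGroup.of (Fin.natAdd n i)).foldl pcomm (extendWord m w)

/-- The iterated commutator `[y, b, ..., b]` with `b` repeated `k` times. -/
def iterPcomm {G : Type*} [Group G] (y b : G) : ℕ → G
  | 0 => y
  | k + 1 => pcomm (iterPcomm y b k) b

theorem map_pcomm_aux {G H : Type*} [Group G] [Group H] (f : G →* H) (a b : G) :
    f (pcomm a b) = pcomm (f a) (f b) := by
  simp [pcomm]

theorem map_foldl_aux {G H : Type*} [Group G] [Group H] (f : G →* H) (l : List G) (a : G) :
    f (l.foldl pcomm a) = (l.map f).foldl pcomm (f a) := by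
  induction l generalizing a with
  | nil => rfl
  | cons b l ih => simp [ih, map_pcomm_aux]

theorem foldl_bound_aux {G : Type*} [Group G] (m : ℕ) : ∀ (S : Set G) (r : ℕ), S.Finite →
    S.ncard ≤ r → (∀ a ∈ S, ∀ b : G, b⁻¹ * a * b ∈ S) →
    ∃ T : Set G, T.Finite ∧ T.ncard ≤ r ^ 2 ^ m ∧
      ∀ a ∈ S, ∀ l : List G, l.length = m → l.foldl pcomm a ∈ T := by
  induction m with
  | zero =>
    intro S r hS hr _
    refine ⟨S, hS, by simpa using hr, ?_⟩
    intro a ha l hl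
    obtain rfl := List.length_eq_zero_iff.mp hl
    exact ha
  | succ m ih =>
    intro S r hS hr hc
    have hP := hS.prod hS
    have hI : ((fun p : G × G => p.1⁻¹ * p.2) '' (S ×ˢ S)).ncard ≤ r ^ 2 := by
      refine (Set.ncard_image_le hP).trans ?_
      rw [Set.ncard_prod, sq]
      exact Nat.mul_le_mul hr hr
    obtain ⟨T, hT, hTc, h⟩ := ih _ (r ^ 2) (hP.image _) hI (by
      rintro _ ⟨⟨x, y⟩, ⟨hx, hy⟩, rfl⟩ b
      refine ⟨(b⁻¹ * x * b, b⁻¹ * y * b), ⟨hc x hx b, hc y hy b⟩, ?_⟩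
      simp only []
      group)
    refine ⟨T, hT, ?_, ?_⟩
    · rwa [← pow_mul, ← pow_succ'] at hTc
    · intro a ha l hl
      cases l with
      | nil => simp at hl
      | cons b l =>
        refine h (pcomm a b) ⟨(a, b⁻¹ * a * b), ⟨ha, hc a ha b⟩, ?_⟩ l (by simpa using hl)
        simp [pcomm, mul_assoc]

/-- if `|G_w| ≤ r`, then `|G_v| ≤ (2r)^{2^m}` for
`v = [w, x_{n+1}, ..., x_{n+m}]`. -/
theorem statement_14 {n : ℕ} (m : ℕ) (w : FreeGroup (Fin n)) (r : ℕ)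
    (G : Type*) [Group G] (hfin : (wValues w G).Finite)
    (hcard : (wValues w G).ncard ≤ r) :
    (wValues (commWord m w) G).Finite ∧
      (wValues (commWord m w) G).ncard ≤ (2 * r) ^ 2 ^ m := by
  obtain ⟨T, hT, hTc, h⟩ := foldl_bound_aux m (wValues w G) r hfin hcard (by
    rintro _ ⟨g, rfl⟩ b
    refine ⟨fun i => b⁻¹ * g i * b, ?_⟩
    have : FreeGroup.lift (fun i => b⁻¹ * g i * b) =
        (MulAut.conj b⁻¹).toMonoidHom.comp (FreeGroup.lift g) := by
      ext i
      simp
    simp [this])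
  have hsub : wValues (commWord m w) G ⊆ T := by
    rintro _ ⟨g, rfl⟩
    simp only [commWord]
    rw [map_foldl_aux]
    refine h _ ⟨fun i => g (Fin.castAdd m i), ?_⟩ _ (by simp)
    have : FreeGroup.lift (fun i => g (Fin.castAdd m i)) =
        (FreeGroup.lift g).comp (FreeGroup.map (Fin.castAdd m)) := by
      ext i
      simp
    simp [this, extendWord]
  refine ⟨hT.subset hsub, (Set.ncard_le_ncard hsub hT).trans (hTc.trans ?_)⟩
  exact Nat.pow_le_pow_left (by omega) _
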